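/- Classification of degree-zero derivations of the q-deformed W(2,2) algebra: let D: W_q → W_q be a linear map preserving the grading, i.e. D(W_qⁿ) ⊆ W_qⁿ for every n ∈ ℤ. Then D satisfies the Leibniz rule D([x,y]_q) = [D(x), y]_q + [x, D(y)]_q for all x, y ∈ W_q if and only if there exist a, b, d ∈ ℂ such that D(L_n) = n·(a·L_n + b·M_n) and D(M_n) = (n·a + d)·M_n for all n ∈ ℤ. -/

import Mathlib

noncomputable section

/-- The underlying space of the q-deformed W(2,2) algebra: formal ℂ-linear
combinations of the basis `{L_n, M_n : n ∈ ℤ}`. -/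
abbrev Wq : Type := (ℤ →₀ ℂ) × (ℤ →₀ ℂ)

/-- The basis vector `L_n`. -/
def Lb (n : ℤ) : Wq := (Finsupp.single n 1, 0)

/-- The basis vector `M_n`. -/
def Mb (n : ℤ) : Wq := (0, Finsupp.single n 1)

/-- The q-number `[n]_q = (q^n - q^(-n))/(q - q⁻¹)`. -/
def qnum (q : ℂ) (n : ℤ) : ℂ := (q ^ n - q ^ (-n)) / (q - q⁻¹)

/-- `⟨n⟩_q = q^n + q^(-n)`. -/
def qang (q : ℂ) (n : ℤ) : ℂ := q ^ n + q ^ (-n)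

/-- The graded subspace `W_qⁿ = span_ℂ{L_n, M_n}`. -/
def Wgr (n : ℤ) : Submodule ℂ Wq := Submodule.span ℂ {Lb n, Mb n}

/-!
On a grading-preserving map the Leibniz rule is a system of functional equations for the four
coefficient sequences of `D L_n = α n L_n + β n M_n` and `D M_n = γ n L_n + δ n M_n`: whenever the
structure constant of the pair `(n, m)` is nonzero, `α` and `β` are additive at `(n, m)`, `γ`
vanishes, and `δ (m + n) = α n + δ m`. For `W_q` this happens for all `n ≠ m`. A sequence that is
additive off the diagonal is already linear, because `0 = 1 + (-1)` and `1 = 2 + (-1)` recover the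
missing instance `2 = 1 + 1`; the equation for `δ` at `m = 0` then gives `δ n = α n + δ 0`.
-/

theorem eq_zsmul_of_map_add_of_ne {A : Type*} [AddCommGroup A] {f : ℤ → A}
    (hf : ∀ n m : ℤ, n ≠ m → f (m + n) = f n + f m) (n : ℤ) : f n = n • f 1 := by
  have map_zero : f 0 = 0 := by simpa using hf 0 1 zero_ne_one
  have map_neg_one : f (-1) = -f 1 := by
    simpa [map_zero, eq_comm, neg_eq_iff_add_eq_zero] using hf 1 (-1) (by decide)
  have map_two : f 2 = f 1 + f 1 := by
    have h : f (-1 + 2) = f 2 + f (-1) := hf 2 (-1) (by decide)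
    rw [neg_add_eq_sub, map_neg_one, ← sub_eq_add_neg] at h
    exact (eq_sub_iff_add_eq.mp h).symm
  have map_add_one (k : ℤ) : f (k + 1) = f k + f 1 := by
    obtain rfl | hk := eq_or_ne k 1
    · exact map_two
    · rw [hf 1 k hk.symm, add_comm]
  induction n using Int.induction_on with
  | zero => rw [map_zero, zero_zsmul]
  | succ i ih => rw [map_add_one, ih, add_one_zsmul]
  | pred i ih =>
    have h := map_add_one (-(i : ℤ) - 1)
    rw [sub_add_cancel, ih] at h
    rw [sub_one_zsmul, h, add_neg_cancel_right]

theorem zpow_injective_of_ne_one {G₀ : Type*} [GroupWithZero G₀] {q : G₀} (hq0 : q ≠ 0)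
    (hq1 : ∀ k : ℤ, 1 ≤ k → q ^ k ≠ 1) : Function.Injective fun n : ℤ ↦ q ^ n :=
  Function.Injective.of_lt_imp_ne fun n m hnm hpow ↦ hq1 (m - n) (by lia) <| by
    rw [zpow_sub₀ hq0, ← hpow, div_self (zpow_ne_zero n hq0)]

theorem qnum_ne_zero {q : ℂ} (hq : Function.Injective fun n : ℤ ↦ q ^ n) {n : ℤ} (hn : n ≠ 0) :
    qnum q n ≠ 0 := by
  have zpow_sub_ne_zero {k : ℤ} (hk : k ≠ 0) : q ^ k - q ^ (-k) ≠ 0 :=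
    sub_ne_zero.mpr (hq.ne (by lia))
  exact div_ne_zero (zpow_sub_ne_zero hn) (by simpa using zpow_sub_ne_zero one_ne_zero)

theorem Wq_linearMap_ext {V : Type*} [AddCommMonoid V] [Module ℂ V] {f g : Wq →ₗ[ℂ] V}
    (hL : ∀ n, f (Lb n) = g (Lb n)) (hM : ∀ n, f (Mb n) = g (Mb n)) : f = g :=
  LinearMap.prod_ext
    (Finsupp.lhom_ext' fun n ↦ LinearMap.ext_ring (hL n))
    (Finsupp.lhom_ext' fun n ↦ LinearMap.ext_ring (hM n))

theorem smul_Lb_add_smul_Mb_inj {n : ℤ} {a b a' b' : ℂ} :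
    a • Lb n + b • Mb n = a' • Lb n + b' • Mb n ↔ a = a' ∧ b = b' := by
  simp [Lb, Mb, Prod.ext_iff, (Finsupp.single_injective n).eq_iff]

theorem leibniz_iff_leibniz_basis {br : Wq →ₗ[ℂ] Wq →ₗ[ℂ] Wq} {D : Wq →ₗ[ℂ] Wq} :
    (∀ x y, D (br x y) = br (D x) y + br x (D y)) ↔
      ∀ n m,
        D (br (Lb n) (Lb m)) = br (D (Lb n)) (Lb m) + br (Lb n) (D (Lb m)) ∧
        D (br (Lb n) (Mb m)) = br (D (Lb n)) (Mb m) + br (Lb n) (D (Mb m)) ∧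
        D (br (Mb n) (Lb m)) = br (D (Mb n)) (Lb m) + br (Mb n) (D (Lb m)) ∧
        D (br (Mb n) (Mb m)) = br (D (Mb n)) (Mb m) + br (Mb n) (D (Mb m)) := by
  refine ⟨fun h n m ↦ ⟨h _ _, h _ _, h _ _, h _ _⟩, fun h x y ↦ ?_⟩
  have leibniz_bilinear : br.compr₂ D = br.comp D + br.compl₂ D :=
    Wq_linearMap_ext
      (fun n ↦ Wq_linearMap_ext (fun m ↦ (h n m).1) (fun m ↦ (h n m).2.1))
      (fun n ↦ Wq_linearMap_ext (fun m ↦ (h n m).2.2.1) (fun m ↦ (h n m).2.2.2))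
  exact LinearMap.congr_fun₂ leibniz_bilinear x y

/-- `br` has the multiplication table of `W(2,2)` with arbitrary structure constants `c n m` in
place of `[m - n]_q`, so that `c n m = m - n` gives the undeformed algebra. -/
structure IsWBracket (c : ℤ → ℤ → ℂ) (br : Wq →ₗ[ℂ] Wq →ₗ[ℂ] Wq) : Prop where
  Lb_Lb (n m : ℤ) : br (Lb n) (Lb m) = c n m • Lb (m + n)
  Lb_Mb (n m : ℤ) : br (Lb n) (Mb m) = c n m • Mb (m + n)
  Mb_Lb (n m : ℤ) : br (Mb n) (Lb m) = c n m • Mb (m + n)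
  Mb_Mb (n m : ℤ) : br (Mb n) (Mb m) = 0

/-- The column vectors of the matrix of `D` on `W_qⁿ` in the basis `L_n, M_n` are
`(α n, β n)` and `(γ n, δ n)`. -/
structure HasGradedCoeffs (D : Wq →ₗ[ℂ] Wq) (α β γ δ : ℤ → ℂ) : Prop where
  map_Lb (n : ℤ) : D (Lb n) = α n • Lb n + β n • Mb n
  map_Mb (n : ℤ) : D (Mb n) = γ n • Lb n + δ n • Mb n

theorem exists_hasGradedCoeffs {D : Wq →ₗ[ℂ] Wq} (hD : ∀ n, ∀ x ∈ Wgr n, D x ∈ Wgr n) :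
    ∃ α β γ δ, HasGradedCoeffs D α β γ δ := by
  have coeffs {n : ℤ} {x : Wq} (hx : x ∈ ({Lb n, Mb n} : Set Wq)) :
      ∃ a b : ℂ, a • Lb n + b • Mb n = D x :=
    Submodule.mem_span_pair.mp (hD n x (Submodule.subset_span hx))
  choose α β hL using fun n ↦ coeffs (Set.mem_insert (Lb n) {Mb n})
  choose γ δ hM using fun n ↦ coeffs (Set.mem_insert_of_mem (Lb n) (Set.mem_singleton (Mb n)))
  exact ⟨α, β, γ, δ, fun n ↦ (hL n).symm, fun n ↦ (hM n).symm⟩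

/-- The equations that the Leibniz rule on `W_qⁿ × W_qᵐ` imposes on the graded coefficients of a
map when the structure constant of `(n, m)` is nonzero. -/
structure LeibnizEquations (α β γ δ : ℤ → ℂ) (n m : ℤ) : Prop where
  α_add : α (m + n) = α n + α m
  β_add : β (m + n) = β n + β m
  γ_left : γ n = 0
  γ_right : γ m = 0
  γ_add : γ (m + n) = 0
  δ_add_left : δ (m + n) = α n + δ m
  δ_add_right : δ (m + n) = δ n + α m

theorem leibnizEquations_linear (a b d : ℂ) (n m : ℤ) :
    LeibnizEquations (fun k ↦ k * a) (fun k ↦ k * b) 0 (fun k ↦ k * a + d) n m where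
  α_add := by push_cast; ring
  β_add := by push_cast; ring
  γ_left := rfl
  γ_right := rfl
  γ_add := rfl
  δ_add_left := by push_cast; ring
  δ_add_right := by push_cast; ring

theorem eq_linear_of_leibnizEquations {α β γ δ : ℤ → ℂ}
    (h : ∀ n m, n ≠ m → LeibnizEquations α β γ δ n m) (n : ℤ) :
    α n = n * α 1 ∧ β n = n * β 1 ∧ γ n = 0 ∧ δ n = n * α 1 + δ 0 := by
  have hα (k : ℤ) : α k = k * α 1 := by
    rw [← zsmul_eq_mul]
    exact eq_zsmul_of_map_add_of_ne (fun n m hnm ↦ (h n m hnm).α_add) k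
  have hβ : β n = n * β 1 := by
    rw [← zsmul_eq_mul]
    exact eq_zsmul_of_map_add_of_ne (fun n m hnm ↦ (h n m hnm).β_add) n
  refine ⟨hα n, hβ, (h n (n + 1) (by lia)).γ_left, ?_⟩
  obtain rfl | hn := eq_or_ne n 0
  · rw [Int.cast_zero, zero_mul, zero_add]
  · rw [← hα, ← (h n 0 hn).δ_add_left, zero_add]

namespace IsWBracket

variable {c : ℤ → ℤ → ℂ} {br : Wq →ₗ[ℂ] Wq →ₗ[ℂ] Wq} {D : Wq →ₗ[ℂ] Wq} {α β γ δ : ℤ → ℂ}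

theorem leibniz_Lb_Lb_iff (hbr : IsWBracket c br) (hD : HasGradedCoeffs D α β γ δ) {n m : ℤ} :
    D (br (Lb n) (Lb m)) = br (D (Lb n)) (Lb m) + br (Lb n) (D (Lb m)) ↔
      c n m * α (m + n) = c n m * (α n + α m) ∧ c n m * β (m + n) = c n m * (β n + β m) := by
  rw [← smul_Lb_add_smul_Mb_inj (n := m + n)]
  simp only [hbr.Lb_Lb, hbr.Lb_Mb, hbr.Mb_Lb, hD.map_Lb, map_add, map_smul,
    LinearMap.add_apply, LinearMap.smul_apply]
  apply Eq.congr <;> module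

theorem leibniz_Lb_Mb_iff (hbr : IsWBracket c br) (hD : HasGradedCoeffs D α β γ δ) {n m : ℤ} :
    D (br (Lb n) (Mb m)) = br (D (Lb n)) (Mb m) + br (Lb n) (D (Mb m)) ↔
      c n m * γ (m + n) = c n m * γ m ∧ c n m * δ (m + n) = c n m * (α n + δ m) := by
  rw [← smul_Lb_add_smul_Mb_inj (n := m + n)]
  simp only [hbr.Lb_Lb, hbr.Lb_Mb, hbr.Mb_Mb, hD.map_Lb, hD.map_Mb, map_add, map_smul,
    LinearMap.add_apply, LinearMap.smul_apply]
  apply Eq.congr <;> module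

theorem leibniz_Mb_Lb_iff (hbr : IsWBracket c br) (hD : HasGradedCoeffs D α β γ δ) {n m : ℤ} :
    D (br (Mb n) (Lb m)) = br (D (Mb n)) (Lb m) + br (Mb n) (D (Lb m)) ↔
      c n m * γ (m + n) = c n m * γ n ∧ c n m * δ (m + n) = c n m * (δ n + α m) := by
  rw [← smul_Lb_add_smul_Mb_inj (n := m + n)]
  simp only [hbr.Lb_Lb, hbr.Mb_Lb, hbr.Mb_Mb, hD.map_Lb, hD.map_Mb, map_add, map_smul,
    LinearMap.add_apply, LinearMap.smul_apply]
  apply Eq.congr <;> module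

theorem leibniz_Mb_Mb_iff (hbr : IsWBracket c br) (hD : HasGradedCoeffs D α β γ δ) {n m : ℤ} :
    D (br (Mb n) (Mb m)) = br (D (Mb n)) (Mb m) + br (Mb n) (D (Mb m)) ↔
      c n m * (γ n + γ m) = 0 := by
  have coeffs_iff : c n m * (γ n + γ m) = 0 ↔
      (0 : ℂ) • Lb (m + n) + (0 : ℂ) • Mb (m + n) =
        (0 : ℂ) • Lb (m + n) + (c n m * (γ n + γ m)) • Mb (m + n) := by
    rw [smul_Lb_add_smul_Mb_inj, eq_self, true_and, eq_comm]
  rw [coeffs_iff]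
  simp only [hbr.Lb_Mb, hbr.Mb_Lb, hbr.Mb_Mb, hD.map_Mb, map_add, map_smul, map_zero,
    LinearMap.add_apply, LinearMap.smul_apply]
  apply Eq.congr <;> module

theorem leibniz_iff_leibnizEquations (hbr : IsWBracket c br) (hD : HasGradedCoeffs D α β γ δ) :
    (∀ x y, D (br x y) = br (D x) y + br x (D y)) ↔
      ∀ n m, c n m ≠ 0 → LeibnizEquations α β γ δ n m := by
  rw [leibniz_iff_leibniz_basis]
  refine forall₂_congr fun n m ↦ ?_
  rw [hbr.leibniz_Lb_Lb_iff hD, hbr.leibniz_Lb_Mb_iff hD, hbr.leibniz_Mb_Lb_iff hD,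
    hbr.leibniz_Mb_Mb_iff hD]
  obtain hc | hc := eq_or_ne (c n m) 0
  · simp [hc]
  simp only [mul_right_inj' hc, mul_eq_zero, hc, false_or, ne_eq, not_false_eq_true, true_imp_iff]
  constructor
  · rintro ⟨⟨hα, hβ⟩, ⟨hγm, hδm⟩, ⟨hγn, hδn⟩, hγ⟩
    have γ_add : γ (m + n) = 0 := by linear_combination (hγm + hγn + hγ) / 2
    exact ⟨hα, hβ, hγn ▸ γ_add, hγm ▸ γ_add, γ_add, hδm, hδn⟩
  · rintro ⟨hα, hβ, hγn, hγm, hγ, hδm, hδn⟩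
    exact ⟨⟨hα, hβ⟩, ⟨hγ.trans hγm.symm, hδm⟩, ⟨hγ.trans hγn.symm, hδn⟩,
      by rw [hγn, hγm, add_zero]⟩

end IsWBracket

theorem degree_zero_derivations_classification_general {c : ℤ → ℤ → ℂ}
    (hc : ∀ n m, n ≠ m → c n m ≠ 0) {br : Wq →ₗ[ℂ] Wq →ₗ[ℂ] Wq} (hbr : IsWBracket c br)
    {D : Wq →ₗ[ℂ] Wq} (hDgr : ∀ n, ∀ x ∈ Wgr n, D x ∈ Wgr n) :
    (∀ x y : Wq, D (br x y) = br (D x) y + br x (D y)) ↔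
      ∃ a b d : ℂ, ∀ n : ℤ,
        D (Lb n) = (n : ℂ) • (a • Lb n + b • Mb n) ∧
        D (Mb n) = ((n : ℂ) * a + d) • Mb n := by
  constructor
  · intro hleibniz
    obtain ⟨α, β, γ, δ, hD⟩ := exists_hasGradedCoeffs hDgr
    have equations (n m : ℤ) (hnm : n ≠ m) : LeibnizEquations α β γ δ n m :=
      (hbr.leibniz_iff_leibnizEquations hD).mp hleibniz n m (hc n m hnm)
    refine ⟨α 1, β 1, δ 0, fun n ↦ ?_⟩
    obtain ⟨hα, hβ, hγ, hδ⟩ := eq_linear_of_leibnizEquations equations n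
    rw [hD.map_Lb, hD.map_Mb, hα, hβ, hγ, hδ]
    constructor <;> module
  · rintro ⟨a, b, d, h⟩
    have hD : HasGradedCoeffs D (fun n ↦ n * a) (fun n ↦ n * b) 0 (fun n ↦ n * a + d) :=
      ⟨fun n ↦ by rw [(h n).1]; module, fun n ↦ by simp [(h n).2]⟩
    exact (hbr.leibniz_iff_leibnizEquations hD).mpr fun n m _ ↦ leibnizEquations_linear a b d n m

/-- Classification of degree-zero derivations of the q-deformed W(2,2)
algebra: a grading-preserving linear map `D` satisfies the Leibniz rule iff
there are `a, b, d ∈ ℂ` with `D(L_n) = n(aL_n + bM_n)`,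
`D(M_n) = (na + d)M_n`. -/
theorem degree_zero_derivations_classification (q : ℂ) (hq0 : q ≠ 0)
    (hq1 : ∀ k : ℤ, 1 ≤ k → q ^ k ≠ 1)
    (br : Wq →ₗ[ℂ] Wq →ₗ[ℂ] Wq)
    (hLL : ∀ n m : ℤ, br (Lb n) (Lb m) = qnum q (m - n) • Lb (m + n))
    (hLM : ∀ n m : ℤ, br (Lb n) (Mb m) = qnum q (m - n) • Mb (m + n))
    (hML : ∀ m n : ℤ, br (Mb m) (Lb n) = qnum q (n - m) • Mb (m + n))
    (hMM : ∀ n m : ℤ, br (Mb n) (Mb m) = 0)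
    (D : Wq →ₗ[ℂ] Wq)
    (hDgr : ∀ (n : ℤ), ∀ x ∈ Wgr n, D x ∈ Wgr n) :
    (∀ x y : Wq, D (br x y) = br (D x) y + br x (D y)) ↔
      ∃ a b d : ℂ, ∀ n : ℤ,
        D (Lb n) = (n : ℂ) • (a • Lb n + b • Mb n) ∧
        D (Mb n) = ((n : ℂ) * a + d) • Mb n :=
  degree_zero_derivations_classification_general
    (fun _ _ hnm ↦ qnum_ne_zero (zpow_injective_of_ne_one hq0 hq1) (sub_ne_zero.mpr hnm.symm))
    ⟨hLL, hLM, fun n m ↦ add_comm n m ▸ hML n m, hMM⟩ hDgr
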